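/- Let X = {x,y,z} with x, y, z distinct, and let c₃ be the quasi-choice over X mapping each singleton to itself and with c₃({x,y}) = {x}, c₃({x,z}) = {x}, c₃({y,z}) = {y}, c₃(X) = {z}. Then the minimum of d_rat(c₃, D) over all rationalizable quasi-choices D over X equals 3; that is, irr_{d_rat}(c₃) = 3. -/

import Mathlib

/-!
Write `X = {x, y, z}`, write `t A B` for the contribution `|C_A(B) Δ D_A(B)|` of a pair `B ⊆ A` to
the distance (`locDist c₃ D A B`), and let `R` rationalize `D`.

Upper bound: the relation with exactly `x R y` and `z R x` gives a `D` which differs from `c₃` only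
at `{x, z}` (where it is `{z}`) and at `{y, z}` (where it is `{y, z}`). Since `D X = {z} = c₃ X`, the
localizations at `X` agree on menus containing `z`, and on the other menus `c₃` and `D` agree
themselves; so the distance is `2 + 1`.

Lower bound: if `z ∉ D X` then `t X X ≥ 1`, and for each of `A = {x, z}`, `A = {y, z}` either
`z ∈ D A`, so that `t A A ≥ 1`, or `z ∉ D_X(A)`, so that `t X A ≥ 1`. If `z ∈ D X` then `z` is
undominated, so `z` lies in `D {x, z}` and in `D {y, z}`, which costs at least one for each. If
`x ∉ D {x, z}`, the menu `{x, z}` costs two. Otherwise `x ∈ D {x, z}`, and so `x ∈ D X`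
unless `y R x`, that is, unless `x ∉ D {x, y}`; either way there is a third unit of distance.
-/

/-- A quasi-choice over `X`: a map on menus with `C A ⊆ A` for every menu `A`. -/
def IsQuasiChoice {X : Type*} [DecidableEq X] (C : Finset X → Finset X) : Prop :=
  ∀ A : Finset X, C A ⊆ A

/-- The rational localization `C_A` of a quasi-choice `C` at the menu `A`,
evaluated at `B ⊆ A`. -/
def ratLoc {X : Type*} [DecidableEq X] (C : Finset X → Finset X) (A B : Finset X) :
    Finset X :=
  if (C A ∩ B).Nonempty then C A ∩ B else C B

/-- The rational distance `d_rat` between two quasi-choices. -/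
noncomputable def dRat {X : Type*} [Fintype X] [DecidableEq X]
    (C C' : Finset X → Finset X) : ℝ :=
  ∑ A ∈ Finset.univ.filter (fun A : Finset X => A ≠ ∅),
    ∑ B ∈ A.powerset, ((symmDiff (ratLoc C A B) (ratLoc C' A B)).card : ℝ)

/-- A quasi-choice is rationalizable if it is explained by the maximization of
some (arbitrary) binary relation. -/
def Rationalizable {X : Type*} [DecidableEq X] (D : Finset X → Finset X) : Prop :=
  ∃ R : X → X → Prop, ∀ A : Finset X, A.Nonempty → ∀ x : X,
    (x ∈ D A ↔ x ∈ A ∧ ∀ a ∈ A, ¬ R a x)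

/-- The contribution of the pair `(A, B)` to `dRat C C'`, as a natural number. -/
def locDist {X : Type*} [DecidableEq X] (C C' : Finset X → Finset X) (A B : Finset X) : ℕ :=
  (symmDiff (ratLoc C A B) (ratLoc C' A B)).card

/-- The distance on a three-element set as an explicit sum; pairs `(A, ∅)` contribute nothing. -/
lemma dRat_eq {X : Type*} [Fintype X] [DecidableEq X] (x y z : X)
    (hxy : x ≠ y) (hxz : x ≠ z) (hyz : y ≠ z)
    (huniv : (Finset.univ : Finset X) = {x, y, z}) (C D : Finset X → Finset X)
    (hC : C ∅ = ∅) (hD : D ∅ = ∅) :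
    dRat C D = ((locDist C D {x} {x} + locDist C D {y} {y} + locDist C D {z} {z}
      + (locDist C D {x, y} {x} + locDist C D {x, y} {y} + locDist C D {x, y} {x, y})
      + (locDist C D {x, z} {x} + locDist C D {x, z} {z} + locDist C D {x, z} {x, z})
      + (locDist C D {y, z} {y} + locDist C D {y, z} {z} + locDist C D {y, z} {y, z})
      + (locDist C D {x, y, z} {x} + locDist C D {x, y, z} {y} + locDist C D {x, y, z} {z}
        + locDist C D {x, y, z} {x, y} + locDist C D {x, y, z} {x, z}
        + locDist C D {x, y, z} {y, z} + locDist C D {x, y, z} {x, y, z}) : ℕ) : ℝ) := by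
  have h0 : ∀ A, locDist C D A ∅ = 0 := by
    intro A; simp [locDist, ratLoc, hC, hD]
  have hs : ∀ (a : X) (f : Finset X → ℕ), ∑ B ∈ ({a} : Finset X).powerset, f B = f ∅ + f {a} := by
    intro a f
    rw [← insert_empty_eq a, Finset.sum_powerset_insert (by simp)]
    simp
  have hp : ∀ (a b : X) (_ : a ≠ b) (f : Finset X → ℕ),
      ∑ B ∈ ({a, b} : Finset X).powerset, f B = f ∅ + f {b} + (f {a} + f {a, b}) := by
    intro a b h f
    rw [Finset.sum_powerset_insert (by simpa using h), hs, hs]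
    simp
  have ht : ∀ f : Finset X → ℕ, ∑ B ∈ ({x, y, z} : Finset X).powerset, f B =
      f ∅ + f {z} + (f {y} + f {y, z}) + (f {x} + f {x, z} + (f {x, y} + f {x, y, z})) := by
    intro f
    rw [Finset.sum_powerset_insert (by simp [hxy, hxz]), hp y z hyz, hp y z hyz]
    simp
  have : dRat C D = ((∑ A ∈ ({x, y, z} : Finset X).powerset,
      if A ≠ ∅ then ∑ B ∈ A.powerset, locDist C D A B else 0 : ℕ) : ℝ) := by
    rw [← huniv, Finset.powerset_univ, ← Finset.sum_filter]
    simp [dRat, locDist]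
  rw [this, ht, ht, hp x y hxy, hp x z hxz, hp y z hyz, hs, hs, hs]
  simp only [h0, ne_eq, Finset.insert_ne_empty, Finset.singleton_ne_empty, not_true_eq_false,
    not_false_eq_true, if_true, if_false]
  norm_cast
  ring

lemma menu_cases {X : Type*} [Fintype X] [DecidableEq X] (x y z : X)
    (hxy : x ≠ y) (hxz : x ≠ z) (hyz : y ≠ z)
    (huniv : (Finset.univ : Finset X) = {x, y, z}) (A : Finset X) :
    A = ∅ ∨ A = {x} ∨ A = {y} ∨ A = {z} ∨ A = {x, y} ∨ A = {x, z} ∨ A = {y, z} ∨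
      A = {x, y, z} := by
  have hall : ∀ P : X → Prop, (∀ b, P b) ↔ P x ∧ P y ∧ P z := by
    intro P
    have : (∀ b, P b) ↔ ∀ b ∈ (Finset.univ : Finset X), P b := by simp
    rw [this, huniv]
    simp
  simp only [Finset.ext_iff, hall, Finset.notMem_empty, Finset.mem_insert, Finset.mem_singleton,
    hxy, hxz, hyz, hxy.symm, hxz.symm, hyz.symm, or_true, or_false, iff_true, iff_false]
  tauto

/-- A point lying in exactly one of the two localizations contributes a unit. -/
lemma one_le_locDist {X : Type*} [DecidableEq X] {C D : Finset X → Finset X} {A B : Finset X}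
    (a : X) (h : ¬ (a ∈ ratLoc C A B ↔ a ∈ ratLoc D A B)) : 1 ≤ locDist C D A B := by
  apply Finset.card_pos.2
  refine ⟨a, ?_⟩
  rw [Finset.mem_symmDiff]
  tauto

lemma two_le_locDist {X : Type*} [DecidableEq X] {C D : Finset X → Finset X} {A B : Finset X}
    (a b : X) (hab : a ≠ b) (ha : ¬ (a ∈ ratLoc C A B ↔ a ∈ ratLoc D A B))
    (hb : ¬ (b ∈ ratLoc C A B ↔ b ∈ ratLoc D A B)) : 2 ≤ locDist C D A B := by
  apply Finset.one_lt_card.2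
  refine ⟨a, ?_, b, ?_, hab⟩ <;> rw [Finset.mem_symmDiff]
  · grind
  · grind

lemma ratLoc_self {X : Type*} [DecidableEq X] {C : Finset X → Finset X}
    (hC : IsQuasiChoice C) (A : Finset X) : ratLoc C A A = C A := by
  unfold ratLoc
  rw [Finset.inter_eq_left.2 (hC A)]
  simp

/-- Localizing at `A` cannot create a choice of `a` which is made neither at `A` nor at `B`. -/
lemma notMem_ratLoc {X : Type*} [DecidableEq X] {C : Finset X → Finset X} {A B : Finset X} {a : X}
    (hA : a ∉ C A) (hB : a ∉ C B) : a ∉ ratLoc C A B := by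
  unfold ratLoc
  split_ifs <;> simp_all

/-- The `d_rat`-degree of irrationality of the choice `c₃` of Example 4.1 equals 3:
3 is the minimum of `d_rat(c₃, D)` over all rationalizable quasi-choices `D`. -/
theorem irr_dRat_c3 {X : Type*} [Fintype X] [DecidableEq X] (x y z : X)
    (hxy : x ≠ y) (hxz : x ≠ z) (hyz : y ≠ z)
    (huniv : (Finset.univ : Finset X) = {x, y, z})
    (c₃ : Finset X → Finset X)
    (h0 : c₃ ∅ = ∅) (hx : c₃ {x} = {x}) (hy : c₃ {y} = {y}) (hz : c₃ {z} = {z})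
    (hxy' : c₃ {x, y} = {x}) (hxz' : c₃ {x, z} = {x})
    (hyz' : c₃ {y, z} = {y}) (hX : c₃ {x, y, z} = {z}) :
    IsLeast {r : ℝ | ∃ D : Finset X → Finset X,
      IsQuasiChoice D ∧ Rationalizable D ∧ dRat c₃ D = r} 3 := by
  classical
  have hc := menu_cases x y z hxy hxz hyz huniv
  have hq : IsQuasiChoice c₃ := by
    intro A
    rcases hc A with rfl | rfl | rfl | rfl | rfl | rfl | rfl | rfl <;>
      simp [h0, hx, hy, hz, hxy', hxz', hyz', hX]
  constructor
  -- The minimizer makes `x` beat `y` and `z` beat `x`, with `y` and `z` unrelated.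
  · let R : X → X → Prop := fun a b => (a = x ∧ b = y) ∨ (a = z ∧ b = x)
    let D : Finset X → Finset X := fun A => A.filter fun b => ∀ a ∈ A, ¬ R a b
    have hqD : IsQuasiChoice D := fun A => Finset.filter_subset _ _
    refine ⟨D, hqD, ⟨R, fun A _ b => by simp [D]⟩, ?_⟩
    have e0 : D ∅ = ∅ := by simp [D]
    have e1 : D {x} = {x} := by ext b; simp [D, R]; grind
    have e2 : D {y} = {y} := by ext b; simp [D, R]; grind
    have e3 : D {z} = {z} := by ext b; simp [D, R]; grind
    have e4 : D {x, y} = {x} := by ext b; simp [D, R]; grind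
    have e5 : D {x, z} = {z} := by ext b; simp [D, R]; grind
    have e6 : D {y, z} = {y, z} := by ext b; simp [D, R]; grind
    have e7 : D {x, y, z} = {z} := by ext b; simp [D, R]; grind
    clear_value D
    rw [dRat_eq x y z hxy hxz hyz huniv c₃ D h0 e0]
    have same : ∀ A B, c₃ A = D A → c₃ B = D B → locDist c₃ D A B = 0 := by
      intro A B h1 h2
      simp [locDist, ratLoc, h1, h2]
    have hz1 : ∀ B : Finset X, z ∈ B → locDist c₃ D {x, y, z} B = 0 := by
      intro B hB
      simp [locDist, ratLoc, hX, e7, hB]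
    rw [same {x} _ (by simp [*]) (by simp [*]), same {y} _ (by simp [*]) (by simp [*]),
      same {z} _ (by simp [*]) (by simp [*]),
      same {x, y} {x} (by simp [*]) (by simp [*]), same {x, y} {y} (by simp [*]) (by simp [*]),
      same {x, y} {x, y} (by simp [*]) (by simp [*]),
      same {x, y, z} {x} (by simp [*]) (by simp [*]),
      same {x, y, z} {y} (by simp [*]) (by simp [*]),
      same {x, y, z} {x, y} (by simp [*]) (by simp [*]),
      hz1 {z} (by simp), hz1 {x, z} (by simp), hz1 {y, z} (by simp), hz1 {x, y, z} (by simp)]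
    have f1 : locDist c₃ D {x, z} {x} = 0 := by
      simp [locDist, ratLoc, *]
    have f2 : locDist c₃ D {x, z} {z} = 0 := by
      simp [locDist, ratLoc, *]
    have f3 : locDist c₃ D {x, z} {x, z} = 2 := by
      rw [locDist, ratLoc_self hq, ratLoc_self hqD, hxz', e5,
        show symmDiff ({x} : Finset X) {z} = {x, z} by ext b; simp [Finset.mem_symmDiff]; grind,
        Finset.card_pair hxz]
    have f4 : locDist c₃ D {y, z} {y} = 0 := by
      simp [locDist, ratLoc, *]
    have f5 : locDist c₃ D {y, z} {z} = 0 := by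
      simp [locDist, ratLoc, *]
    have f6 : locDist c₃ D {y, z} {y, z} = 1 := by
      rw [locDist, ratLoc_self hq, ratLoc_self hqD, hyz', e6,
        show symmDiff ({y} : Finset X) {y, z} = {z} by ext b; simp [Finset.mem_symmDiff]; grind,
        Finset.card_singleton]
    rw [f1, f2, f3, f4, f5, f6]
    norm_num
  · rintro _ ⟨D, hqD, ⟨R, hR⟩, rfl⟩
    have e0 : D ∅ = ∅ := Finset.subset_empty.1 (hqD ∅)
    rw [dRat_eq x y z hxy hxz hyz huniv c₃ D h0 e0]
    have self1 : ∀ (A : Finset X) (a : X), ¬ (a ∈ c₃ A ↔ a ∈ D A) → 1 ≤ locDist c₃ D A A := by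
      intro A a h
      apply one_le_locDist a
      rwa [ratLoc_self hq, ratLoc_self hqD]
    have self2 : ∀ (A : Finset X) (a b : X), a ≠ b → ¬ (a ∈ c₃ A ↔ a ∈ D A) →
        ¬ (b ∈ c₃ A ↔ b ∈ D A) → 2 ≤ locDist c₃ D A A := by
      intro A a b hab h h'
      apply two_le_locDist a b hab <;> rwa [ratLoc_self hq, ratLoc_self hqD]
    by_cases hzX : z ∈ D {x, y, z}
    · have hz' := (hR {x, y, z} (by simp) z).1 hzX
      have zxz : z ∈ D {x, z} := (hR _ (by simp) z).2 ⟨by simp, fun a ha => hz'.2 a (by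
        simp only [Finset.mem_insert, Finset.mem_singleton] at ha ⊢; tauto)⟩
      have zyz : z ∈ D {y, z} := (hR _ (by simp) z).2 ⟨by simp, fun a ha => hz'.2 a (by
        simp only [Finset.mem_insert, Finset.mem_singleton] at ha ⊢; tauto)⟩
      have k1 := self1 {x, z} z (by simp [hxz', zxz, hxz.symm])
      have k2 := self1 {y, z} z (by simp [hyz', zyz, hyz.symm])
      suffices 2 ≤ locDist c₃ D {x, z} {x, z} ∨ 1 ≤ locDist c₃ D {x, y, z} {x, y, z} ∨
          1 ≤ locDist c₃ D {x, y} {x, y} by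
        norm_cast; omega
      by_cases xxz : x ∈ D {x, z}
      · right
        by_cases xX : x ∈ D {x, y, z}
        · exact Or.inl (self1 _ x (by simp [hX, xX, hxz]))
        · refine Or.inr (self1 _ x ?_)
          have h1 := hR {x, z} (by simp) x
          have h2 := hR {x, y, z} (by simp) x
          have h3 := hR {x, y} (by simp) x
          simp only [Finset.mem_insert, Finset.mem_singleton, forall_eq_or_imp, forall_eq,
            hxy'] at h1 h2 h3 ⊢
          tauto
      · exact Or.inl (self2 _ x z hxz (by simp [hxz', xxz]) (by simp [hxz', zxz, hxz.symm]))
    · have k0 := self1 {x, y, z} z (by simp [hX, hzX])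
      have pair : ∀ A : Finset X, z ∈ A → z ∉ c₃ A →
          1 ≤ locDist c₃ D {x, y, z} A + locDist c₃ D A A := by
        intro A hA hcA
        by_cases h : z ∈ D A
        · have := self1 A z (by simp [h, hcA])
          omega
        · have : 1 ≤ locDist c₃ D {x, y, z} A := by
            apply one_le_locDist z
            have := notMem_ratLoc hzX h
            simp [this]
            simp [ratLoc, hX, hA]
          omega
      have k1 := pair {x, z} (by simp) (by simp [hxz', hxz.symm])
      have k2 := pair {y, z} (by simp) (by simp [hyz', hyz.symm])
      norm_cast
      omega
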